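/- The game coloring number is monotone: if H is a subgraph of a finite simple graph G, then gcol(H) ≤ gcol(G). -/

import Mathlib

open scoped Classical

/-- The number of backneighbors of `v` with respect to the ordering `τ`:
neighbors of `v` in `G` that appear (strictly) before `v` in `τ`. -/
noncomputable def backDeg {V : Type*} [Fintype V] (G : SimpleGraph V)
    (τ : List V) (v : V) : ℕ :=
  (Finset.univ.filter (fun u =>
    G.Adj v u ∧ ∃ i j : Fin τ.length, i < j ∧ τ.get i = u ∧ τ.get j = v)).card

/-- `col(G, τ)`: the maximum over all vertices `v` of
`1 +` (the number of backneighbors of `v` with respect to `τ`). -/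
noncomputable def colOrd {V : Type*} [Fintype V] (G : SimpleGraph V)
    (τ : List V) : ℕ :=
  Finset.univ.sup (fun v => 1 + backDeg G τ v)

/-- The minimax value of the ordering game on `G` continued from the position
(partial ordering) `σ`, where `alice = true` means it is Alice's turn to choose
an unchosen vertex (Alice minimizes the final score `colOrd G τ`, Bob
maximizes it).  This value is the least `s` such that the player-to-move's
opponent-robust guarantee holds, i.e. the least `s` such that Alice has a
strategy from this position guaranteeing a score of at most `s`. -/
noncomputable def gameVal {V : Type*} [Fintype V] (G : SimpleGraph V)
    (alice : Bool) (σ : List V) : ℕ :=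
  if h : (Finset.univ.filter (fun v : V => v ∉ σ)).Nonempty then
    if alice then
      (Finset.univ.filter (fun v : V => v ∉ σ)).attach.inf'
        (Finset.attach_nonempty_iff.mpr h)
        (fun v => gameVal G false (σ ++ [v.1]))
    else
      (Finset.univ.filter (fun v : V => v ∉ σ)).attach.sup'
        (Finset.attach_nonempty_iff.mpr h)
        (fun v => gameVal G true (σ ++ [v.1]))
  else colOrd G σ
termination_by (Finset.univ.filter (fun v : V => v ∉ σ)).card
decreasing_by
  all_goals {
    have hv : ↑v ∉ σ := (Finset.mem_filter.mp v.2).2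
    apply Finset.card_lt_card
    constructor
    · intro u hu
      simp only [Finset.mem_filter, List.mem_append] at hu ⊢
      exact ⟨hu.1, fun h' => hu.2 (Or.inl h')⟩
    · intro hsub
      have := hsub (Finset.mem_filter.mpr ⟨Finset.mem_univ _, hv⟩)
      simp at this }

/-- The game coloring number of `G`: the value of the ordering game on `G`
with Alice moving first (also written `gcol_A`). -/
noncomputable def gcol {V : Type*} [Fintype V] (G : SimpleGraph V) : ℕ :=
  gameVal G true []

/-- The value of the Bob ordering game on `G` (Bob moves first). -/
noncomputable def gcolB {V : Type*} [Fintype V] (G : SimpleGraph V) : ℕ :=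
  gameVal G false []

/-- The `σ`-game coloring number of `G`: the value of the `σ`-preordered
ordering game, in which Alice moves first if `|σ|` is even and Bob moves
first if `|σ|` is odd. -/
noncomputable def sigmaGcol {V : Type*} [Fintype V] (G : SimpleGraph V)
    (σ : List V) : ℕ :=
  if Even σ.length then gameVal G true σ else gameVal G false σ

/-- The Alice `σ`-game coloring number: the value of the `σ`-preordered game
in which Alice moves first. -/
noncomputable def sigmaGcolA {V : Type*} [Fintype V] (G : SimpleGraph V)
    (σ : List V) : ℕ :=
  gameVal G true σ

/-- The Bob `σ`-game coloring number: the value of the `σ`-preordered game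
in which Bob moves first. -/
noncomputable def sigmaGcolB {V : Type*} [Fintype V] (G : SimpleGraph V)
    (σ : List V) : ℕ :=
  gameVal G false σ

/-!
Being chosen when `X` is the set of vertices already chosen gives `v` exactly
`#(G.neighborFinset v ∩ X)` backneighbors, whatever the order in which `X` was chosen. Hence
`gcol G ≤ s` says that Alice wins a game on sets of vertices, in which no vertex may be chosen
after `s` of its neighbors. In that game a vertex of degree less than `s` can be chosen at any
time, and as long as Alice is winning there is such a vertex left: the last one to be chosen.

To win on `H`, Alice imitates a winning strategy on `G`, keeping the set `X` chosen in `H` inside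
the set `Y` chosen in the imagined game on `G`, where every vertex of `H` in `Y` but not in `X` has
degree less than `s`. Whenever the imagined game needs a move of Bob with no counterpart in `H`,
namely after Alice's strategy has answered outside `H` or Bob has chosen in `H` a vertex already in
`Y`, she lets Bob choose in `G` a vertex of degree less than `s`, which preserves the invariant.
-/

open scoped Finset SimpleGraph
open SimpleGraph (Copy)

section Ordering

theorem exists_lt_get_eq_iff_sublist {α : Type*} {τ : List α} {u v : α} :
    (∃ i j : Fin τ.length, i < j ∧ τ.get i = u ∧ τ.get j = v) ↔ [u, v].Sublist τ := by
  have avoid_iff : (∀ i j : Fin τ.length, i < j → ¬(τ.get i = u ∧ τ.get j = v)) ↔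
      ∀ {a b}, [a, b].Sublist τ → ¬(a = u ∧ b = v) :=
    List.pairwise_iff_get.symm.trans
      (List.pairwise_iff_forall_sublist (R := fun a b => ¬(a = u ∧ b = v)))
  grind

theorem pair_sublist_concat_iff {α : Type*} {τ : List α} {u v x : α} :
    [u, v].Sublist (τ ++ [x]) ↔ [u, v].Sublist τ ∨ v = x ∧ u ∈ τ := by
  rw [← List.reverse_sublist]
  simp [List.sublist_cons_iff, ← List.reverse_sublist (l₂ := τ)]

variable {V : Type*} [Fintype V] (G : SimpleGraph V)

theorem backDeg_concat_of_ne (σ : List V) {v x : V} (hvx : v ≠ x) :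
    backDeg G (σ ++ [x]) v = backDeg G σ v := by
  simp only [backDeg, exists_lt_get_eq_iff_sublist, pair_sublist_concat_iff, hvx, false_and,
    or_false]

theorem backDeg_concat_self (σ : List V) (x : V) :
    backDeg G (σ ++ [x]) x = #(G.neighborFinset x ∩ σ.toFinset) := by
  have before_last_iff (u : V) : [u, x].Sublist (σ ++ [x]) ↔ u ∈ σ := by
    rw [pair_sublist_concat_iff, eq_self, true_and, or_iff_right_of_imp]
    exact fun h => h.subset List.mem_cons_self
  simp only [backDeg, exists_lt_get_eq_iff_sublist, before_last_iff]
  congr 1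
  ext u
  simp

theorem forall_backDeg_concat_lt_iff {σ : List V} {x : V} (hx : x ∉ σ) (s : ℕ) :
    (∀ v ∈ σ ++ [x], backDeg G (σ ++ [x]) v < s) ↔
      (∀ v ∈ σ, backDeg G σ v < s) ∧ #(G.neighborFinset x ∩ σ.toFinset) < s := by
  simp only [List.forall_mem_append, List.forall_mem_singleton, backDeg_concat_self G σ x]
  refine and_congr_left' (forall₂_congr fun v hv => ?_)
  rw [backDeg_concat_of_ne G σ (ne_of_mem_of_not_mem hv hx)]

theorem colOrd_le_iff {τ : List V} {s : ℕ} :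
    colOrd G τ ≤ s ↔ ∀ v, backDeg G τ v < s := by
  simp [colOrd, Nat.one_add_le_iff]

end Ordering

section GameValue

variable {V : Type*} [Fintype V] (G : SimpleGraph V) {σ : List V} {s : ℕ}

theorem gameVal_of_forall_mem (a : Bool) (hσ : ∀ v, v ∈ σ) : gameVal G a σ = colOrd G σ := by
  rw [gameVal, dif_neg (by simp [hσ])]

theorem gameVal_true_le_iff (hσ : ∃ v, v ∉ σ) :
    gameVal G true σ ≤ s ↔ ∃ v, v ∉ σ ∧ gameVal G false (σ ++ [v]) ≤ s := by
  rw [gameVal, dif_pos (by simpa [Finset.filter_nonempty_iff] using hσ), if_pos rfl]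
  simp [Finset.inf'_le_iff]

theorem gameVal_false_le_iff (hσ : ∃ v, v ∉ σ) :
    gameVal G false σ ≤ s ↔ ∀ v, v ∉ σ → gameVal G true (σ ++ [v]) ≤ s := by
  rw [gameVal, dif_pos (by simpa [Finset.filter_nonempty_iff] using hσ), if_neg (by simp)]
  simp [Finset.sup'_le_iff]

end GameValue

section Degree

variable {V : Type*} [Fintype V] {G : SimpleGraph V} {s : ℕ} {v : V}

theorem card_neighborFinset_inter_lt_of_degree_lt (hdeg : G.degree v < s) (X : Finset V) :
    #(G.neighborFinset v ∩ X) < s :=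
  (Finset.card_le_card Finset.inter_subset_left).trans_lt hdeg

theorem degree_lt_of_insert_eq_univ {X : Finset V} (huniv : insert v X = Finset.univ)
    (hlt : #(G.neighborFinset v ∩ X) < s) : G.degree v < s := by
  have neighbors_subset : G.neighborFinset v ⊆ X := fun u hu =>
    (Finset.mem_insert.1 (huniv ▸ Finset.mem_univ u)).resolve_left
      ((G.mem_neighborFinset v u).1 hu).ne'
  rwa [Finset.inter_eq_left.2 neighbors_subset] at hlt

end Degree

/-- Alice wins the threshold form of the ordering game from the position in which the set `X` has
been chosen: she can ensure that every vertex still to be chosen has fewer than `s` neighbors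
chosen before it. The Boolean is `true` if Alice is to move. If Bob is to move and `X` is everything
then `bob` applies vacuously, so `full` is only needed for Alice. -/
inductive AliceWins {V : Type*} [Fintype V] (G : SimpleGraph V) (s : ℕ) : Bool → Finset V → Prop
  | full : AliceWins G s true Finset.univ
  | alice {X : Finset V} (v : V) (hv : v ∉ X) (hlt : #(G.neighborFinset v ∩ X) < s)
      (hwin : AliceWins G s false (insert v X)) : AliceWins G s true X
  | bob {X : Finset V} (hlt : ∀ v ∉ X, #(G.neighborFinset v ∩ X) < s)
      (hwin : ∀ v ∉ X, AliceWins G s true (insert v X)) : AliceWins G s false X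

namespace AliceWins

variable {V : Type*} [Fintype V] {G : SimpleGraph V} {s : ℕ} {X : Finset V}

theorem true_iff (hX : ∃ v, v ∉ X) : AliceWins G s true X ↔
    ∃ v ∉ X, #(G.neighborFinset v ∩ X) < s ∧ AliceWins G s false (insert v X) := by
  constructor
  · rintro (_ | ⟨v, hv, hlt, hwin⟩)
    · simp at hX
    · exact ⟨v, hv, hlt, hwin⟩
  · rintro ⟨v, hv, hlt, hwin⟩
    exact alice v hv hlt hwin

theorem false_iff : AliceWins G s false X ↔
    ∀ v ∉ X, #(G.neighborFinset v ∩ X) < s ∧ AliceWins G s true (insert v X) := by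
  constructor
  · rintro (_ | _ | ⟨hlt, hwin⟩) v hv
    exact ⟨hlt v hv, hwin v hv⟩
  · intro h
    exact bob (fun v hv => (h v hv).1) fun v hv => (h v hv).2

theorem univ (a : Bool) : AliceWins G s a Finset.univ := by
  cases a with
  | true => exact full
  | false => simp [false_iff]

theorem of_forall_degree_lt (a : Bool) (hX : ∀ v ∉ X, G.degree v < s) : AliceWins G s a X := by
  induction X using WellFoundedGT.induction generalizing a with
  | ind X ih =>
    have playable (v : V) (hv : v ∉ X) : #(G.neighborFinset v ∩ X) < s :=
      card_neighborFinset_inter_lt_of_degree_lt (hX v hv) X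
    have win_insert (b : Bool) (v : V) (hv : v ∉ X) : AliceWins G s b (insert v X) :=
      ih _ (Finset.ssubset_insert hv) b fun u hu => hX u fun huX =>
        hu (Finset.mem_insert_of_mem huX)
    cases a with
    | false => exact bob playable (win_insert true)
    | true =>
      by_cases hfull : ∃ v, v ∉ X
      · obtain ⟨v, hv⟩ := hfull
        exact alice v hv (playable v hv) (win_insert false v hv)
      · obtain rfl : X = Finset.univ := by simpa [Finset.eq_univ_iff_forall] using hfull
        exact full

theorem exists_notMem_degree_lt {a : Bool} (hwin : AliceWins G s a X) (hX : ∃ v, v ∉ X) :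
    ∃ v ∉ X, G.degree v < s := by
  induction X using WellFoundedGT.induction generalizing a with
  | ind X ih =>
    obtain ⟨v, hv, hlt, hwin'⟩ :
        ∃ v ∉ X, #(G.neighborFinset v ∩ X) < s ∧ AliceWins G s (!a) (insert v X) := by
      cases a with
      | true => exact (true_iff hX).1 hwin
      | false => exact hX.imp fun v hv => ⟨hv, false_iff.1 hwin v hv⟩
    by_cases huniv : insert v X = Finset.univ
    · exact ⟨v, hv, degree_lt_of_insert_eq_univ huniv hlt⟩
    · obtain ⟨u, hu, hdeg⟩ := ih _ (Finset.ssubset_insert hv) hwin'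
        (by simpa [Finset.eq_univ_iff_forall] using huniv)
      exact ⟨u, fun huX => hu (Finset.mem_insert_of_mem huX), hdeg⟩

end AliceWins

theorem gameVal_le_iff_aliceWins {V : Type*} [Fintype V] (G : SimpleGraph V) (a : Bool)
    (σ : List V) (s : ℕ) :
    gameVal G a σ ≤ s ↔ (∀ v ∈ σ, backDeg G σ v < s) ∧ AliceWins G s a σ.toFinset := by
  by_cases hσ : ∃ v, v ∉ σ
  · have concat_iff (b : Bool) (v : V) (hv : v ∉ σ) : gameVal G b (σ ++ [v]) ≤ s ↔
        ((∀ u ∈ σ, backDeg G σ u < s) ∧ #(G.neighborFinset v ∩ σ.toFinset) < s) ∧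
          AliceWins G s b (insert v σ.toFinset) := by
      have toFinset_concat : (σ ++ [v]).toFinset = insert v σ.toFinset := by ext; simp
      rw [gameVal_le_iff_aliceWins, forall_backDeg_concat_lt_iff G hv, toFinset_concat]
    cases a with
    | true =>
      rw [gameVal_true_le_iff G hσ, AliceWins.true_iff (by simpa using hσ)]
      simp only [List.mem_toFinset]
      grind
    | false =>
      rw [gameVal_false_le_iff G hσ, AliceWins.false_iff]
      simp only [List.mem_toFinset]
      grind
  · have mem_all : ∀ v, v ∈ σ := by simpa using hσ
    have toFinset_eq : σ.toFinset = Finset.univ := by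
      simpa [Finset.eq_univ_iff_forall] using mem_all
    simp [gameVal_of_forall_mem G a mem_all, colOrd_le_iff, mem_all, toFinset_eq, AliceWins.univ]
termination_by #{v | v ∉ σ}
decreasing_by
  exact Finset.card_lt_card ⟨fun u => by simp +contextual, fun h => by simpa [hv] using @h v⟩

theorem gcol_le_iff_aliceWins {V : Type*} [Fintype V] (G : SimpleGraph V) (s : ℕ) :
    gcol G ≤ s ↔ AliceWins G s true ∅ := by
  simp [gcol, gameVal_le_iff_aliceWins]

section Copy

variable {V W : Type*} [Fintype W] {G : SimpleGraph V} {H : SimpleGraph W}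
  {f : Copy H G} {s : ℕ} {X : Finset W} {Y : Finset V}

/-- The invariant of Alice's imitation strategy: the position `X` on `H` is obtained from the
position `Y` on `G` by ignoring vertices outside the copy `f` of `H` and postponing some vertices
of degree less than `s` in `H`. -/
structure IsPostponement (f : Copy H G) (s : ℕ) (X : Finset W) (Y : Finset V) : Prop where
  map_mem : ∀ w ∈ X, f w ∈ Y
  degree_lt : ∀ w ∉ X, f w ∈ Y → H.degree w < s

namespace IsPostponement

theorem insert_map (h : IsPostponement f s X Y) (w : W) :
    IsPostponement f s (insert w X) (insert (f w) Y) where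
  map_mem u hu := by
    rcases Finset.mem_insert.1 hu with rfl | hu
    · exact Finset.mem_insert_self _ _
    · exact Finset.mem_insert_of_mem (h.map_mem u hu)
  degree_lt u hu hfu := by
    obtain ⟨huw, huX⟩ : u ≠ w ∧ u ∉ X := by simpa using hu
    exact h.degree_lt u huX (Finset.mem_of_mem_insert_of_ne hfu (f.injective.ne huw))

theorem insert_left (h : IsPostponement f s X Y) {w : W} (hw : f w ∈ Y) :
    IsPostponement f s (insert w X) Y := by
  simpa [hw] using h.insert_map w

theorem insert_right (h : IsPostponement f s X Y) {v : V} (hv : ∀ w, f w = v → H.degree w < s) :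
    IsPostponement f s X (insert v Y) where
  map_mem w hw := Finset.mem_insert_of_mem (h.map_mem w hw)
  degree_lt w hw hfw := (Finset.mem_insert.1 hfw).elim (hv w) (h.degree_lt w hw)

variable [Fintype V]

theorem insert_right_of_degree_lt (h : IsPostponement f s X Y) {v : V} (hv : G.degree v < s) :
    IsPostponement f s X (insert v Y) :=
  h.insert_right fun w hw => (f.degree_le w).trans_lt (hw ▸ hv)

theorem card_neighborFinset_inter_le (h : IsPostponement f s X Y) (w : W) :
    #(H.neighborFinset w ∩ X) ≤ #(G.neighborFinset (f w) ∩ Y) := by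
  refine Finset.card_le_card_of_injOn f (fun u hu => ?_) f.injective.injOn
  obtain ⟨hadj, huX⟩ : H.Adj w u ∧ u ∈ X := by simpa using hu
  simpa using ⟨f.toHom.map_adj hadj, h.map_mem u huX⟩

theorem aliceWins_of_univ (h : IsPostponement f s X Finset.univ) (a : Bool) :
    AliceWins H s a X :=
  .of_forall_degree_lt a fun w hw => h.degree_lt w hw (Finset.mem_univ _)

end IsPostponement

variable [Fintype V]

/-- The imagined game can lag by a move of Bob, so the induction must also cover positions where
Alice is to move in `H` but Bob in `G`. -/
theorem AliceWins.of_isPostponement {b : Bool} (hwin : AliceWins G s b Y)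
    (h : IsPostponement f s X Y) {a : Bool} (hab : b = true → a = true) : AliceWins H s a X := by
  induction hwin generalizing a X with
  | full => exact h.aliceWins_of_univ a
  | @alice Y v hv hlt _ ih =>
    obtain rfl : a = true := hab rfl
    by_cases hrange : ∃ w, f w = v
    · obtain ⟨w, rfl⟩ := hrange
      exact .alice w (fun hw => hv (h.map_mem w hw))
        ((h.card_neighborFinset_inter_le w).trans_lt hlt) (ih (h.insert_map w) (by simp))
    · exact ih (h.insert_right fun w hw => (hrange ⟨w, hw⟩).elim) (by simp)
  | @bob Y hlt hwin ih =>
    by_cases hY : Y = Finset.univ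
    · subst hY
      exact h.aliceWins_of_univ a
    obtain ⟨z, hz, hdeg⟩ := (AliceWins.bob hlt hwin).exists_notMem_degree_lt
      (by simpa [Finset.eq_univ_iff_forall] using hY)
    have win_true {X' : Finset W} (h' : IsPostponement f s X' Y) : AliceWins H s true X' :=
      ih z hz (h'.insert_right_of_degree_lt hdeg) (by simp)
    cases a with
    | true => exact win_true h
    | false =>
      refine AliceWins.false_iff.2 fun w hw => ?_
      by_cases hfw : f w ∈ Y
      · exact ⟨card_neighborFinset_inter_lt_of_degree_lt (h.degree_lt w hw hfw) X,
          win_true (h.insert_left hfw)⟩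
      · exact ⟨(h.card_neighborFinset_inter_le w).trans_lt (hlt (f w) hfw),
          ih (f w) hfw (h.insert_map w) (by simp)⟩

theorem gcol_subgraph_le_general (hHG : H ⊑ G) : gcol H ≤ gcol G := by
  obtain ⟨f⟩ := hHG
  have start : IsPostponement f (gcol G) ∅ ∅ := ⟨by simp, by simp⟩
  have win_G : AliceWins G (gcol G) true ∅ := (gcol_le_iff_aliceWins G _).1 le_rfl
  exact (gcol_le_iff_aliceWins H _).2 (win_G.of_isPostponement start id)

end Copy

/-- Monotonicity of the game coloring number: if `H` is a
subgraph of `G`, then `gcol(H) ≤ gcol(G)`. -/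
theorem gcol_subgraph_le {V : Type*} [Fintype V] (G : SimpleGraph V)
    (H : G.Subgraph) :
    gcol H.coe ≤ gcol G :=
  gcol_subgraph_le_general H.coe_isContained
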